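/- For every p ∈ (1,∞) and ℓ ∈ ℝ there exist constants 0 < c ≤ C such that for all ε ∈ (0,1] and all f : εℤ² → ℝ, setting N(f) := ‖f‖_{L^p_ℓ(εℤ²)} + ( ε² Σ_{x∈εℤ²} Σ_{i=1,2} ρ_ℓ(x)^p ε^{−p} |f(x+εe_i) − f(x)|^p )^{1/p}, where e₁, e₂ is the standard basis of ℝ², one has c·N(f) ≤ ‖f‖_{W^{1,p}_ℓ(εℤ²)} ≤ C·N(f); i.e., on the lattice the W^{1,p}_ℓ norm is equivalent, uniformly in ε, to the norm built from nearest-neighbour difference quotients. -/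

import Mathlib

open MeasureTheory
open scoped ENNReal

/-- The polynomial weight `ρ_ℓ(y) = (1+|y|²)^{-ℓ/2}` on `ℝ²`. -/
noncomputable def rho2 (ℓ : ℝ) (y : ℝ × ℝ) : ℝ := (1 + y.1 ^ 2 + y.2 ^ 2) ^ (-ℓ / 2)

/-- The lattice point `(εn₁, εn₂) ∈ εℤ² ⊂ ℝ²` indexed by `n ∈ ℤ²`. -/
noncomputable def pt (ε : ℝ) (n : ℤ × ℤ) : ℝ × ℝ := (ε * (n.1 : ℝ), ε * (n.2 : ℝ))

/-- The square `Q_ε(z) = (z₁-ε/2, z₁+ε/2] × (z₂-ε/2, z₂+ε/2]`. -/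
def Qeps (ε : ℝ) (z : ℝ × ℝ) : Set (ℝ × ℝ) :=
  Set.Ioc (z.1 - ε / 2) (z.1 + ε / 2) ×ˢ Set.Ioc (z.2 - ε / 2) (z.2 + ε / 2)

/-- The discretization operator `D^ε f(z) = ε⁻² ∫_{Q_ε(z)} f(x) dx`. -/
noncomputable def Deps (ε : ℝ) (f : ℝ × ℝ → ℝ) (n : ℤ × ℤ) : ℝ :=
  (ε ^ 2)⁻¹ * ∫ x in Qeps ε (pt ε n), f x

/-- The index of the cell `Q_ε(z)` containing `t` in one coordinate:
`t ∈ (εn - ε/2, εn + ε/2]` iff `n = ⌈t/ε - 1/2⌉`. -/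
noncomputable def cellIdx (ε t : ℝ) : ℤ := ⌈t / ε - 1 / 2⌉

/-- The extension operator `E^ε`, producing the piecewise constant function with
`E^ε f = f(z)` on `Q_ε(z)`. -/
noncomputable def Eeps (ε : ℝ) (f : ℤ × ℤ → ℝ) (x : ℝ × ℝ) : ℝ :=
  f (cellIdx ε x.1, cellIdx ε x.2)

/-- The weighted norm `‖g‖_{L^p_ℓ(ℝ²)} = (∫_{ℝ²} |ρ_ℓ(x) g(x)|^p dx)^{1/p}`,
valued in `ℝ≥0∞`. -/
noncomputable def lpNormR2 (p ℓ : ℝ) (g : ℝ × ℝ → ℝ) : ℝ≥0∞ :=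
  (∫⁻ x : ℝ × ℝ, ENNReal.ofReal (|rho2 ℓ x * g x| ^ p)) ^ (1 / p)

/-- The weighted lattice norm `‖f‖_{L^p_ℓ(εℤ²)} = (ε² Σ_{z∈εℤ²} |ρ_ℓ(z) f(z)|^p)^{1/p}`,
valued in `ℝ≥0∞`. -/
noncomputable def lpNormLat (p ℓ ε : ℝ) (f : ℤ × ℤ → ℝ) : ℝ≥0∞ :=
  (ENNReal.ofReal (ε ^ 2) *
    ∑' n : ℤ × ℤ, ENNReal.ofReal (|rho2 ℓ (pt ε n) * f n| ^ p)) ^ (1 / p)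

/-- The Euclidean length of a point of `ℝ²`. -/
noncomputable def en2 (y : ℝ × ℝ) : ℝ := Real.sqrt (y.1 ^ 2 + y.2 ^ 2)

/-- The weighted lattice `L^p_ℓ` norm of the difference `f(·+k) − f`. -/
noncomputable def latDiffNorm (p ℓ ε : ℝ) (f : ℤ × ℤ → ℝ) (k : ℤ × ℤ) : ℝ≥0∞ :=
  (ENNReal.ofReal (ε ^ 2) *
    ∑' n : ℤ × ℤ, ENNReal.ofReal (rho2 ℓ (pt ε n) ^ p * |f (n + k) - f n| ^ p)) ^ (1 / p)

/-- The lattice fractional Sobolev norm `‖f‖_{W^{s,p}_ℓ(εℤ²)} = ‖f‖_{L^p_ℓ(εℤ²)} +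
sup{ |k|^{-s} ‖f(·+k) − f‖_{L^p_ℓ(εℤ²)} : k ∈ εℤ², 0 < |k| ≤ 1 }`. -/
noncomputable def latWNorm (s p ℓ ε : ℝ) (f : ℤ × ℤ → ℝ) : ℝ≥0∞ :=
  lpNormLat p ℓ ε f +
    ⨆ (k : ℤ × ℤ) (_ : 0 < en2 (pt ε k) ∧ en2 (pt ε k) ≤ 1),
      ENNReal.ofReal (en2 (pt ε k) ^ (-s)) * latDiffNorm p ℓ ε f k

/-- The difference-quotient norm of the weighted Besov space `B^s_{p,∞,ℓ}(ℝ²)`: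
`‖g‖_{L^p_ℓ} + sup{ |h|^{-s} ‖g(·+h) − g‖_{L^p_ℓ} : h ∈ ℝ², 0 < |h| ≤ 1 }`. -/
noncomputable def besovDiffNormR2 (s p ℓ : ℝ) (g : ℝ × ℝ → ℝ) : ℝ≥0∞ :=
  lpNormR2 p ℓ g +
    ⨆ (h : ℝ × ℝ) (_ : 0 < en2 h ∧ en2 h ≤ 1),
      ENNReal.ofReal (en2 h ^ (-s)) * lpNormR2 p ℓ (fun x => g (x + h) - g x)

/-- The nearest-neighbour difference-quotient norm
`N(f) = ‖f‖_{L^p_ℓ(εℤ²)} + (ε² Σ_{x∈εℤ²} Σ_{i=1,2} ρ_ℓ(x)^p ε^{-p}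
|f(x+εe_i) − f(x)|^p)^{1/p}`. -/
noncomputable def nnQuotNorm (p ℓ ε : ℝ) (f : ℤ × ℤ → ℝ) : ℝ≥0∞ :=
  lpNormLat p ℓ ε f +
    (ENNReal.ofReal (ε ^ 2) *
      ∑' n : ℤ × ℤ,
        (ENNReal.ofReal (rho2 ℓ (pt ε n) ^ p * ε ^ (-p) * |f (n + (1, 0)) - f n| ^ p) +
          ENNReal.ofReal (rho2 ℓ (pt ε n) ^ p * ε ^ (-p) * |f (n + (0, 1)) - f n| ^ p))) ^
      (1 / p)

/-! Up to constants, both sides add to `‖f‖_{L^p_ℓ}` the quantities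
`D k = ‖f(· + k) - f‖_{L^p_ℓ}`: the nearest-neighbour seminorm is comparable to
`ε⁻¹ (D e₁ + D e₂)`, which is the part `k ∈ {e₁, e₂}` of the supremum. Conversely, walk from `0`
to `k` along the two axes; every step contributes a translate of `f(· + eᵢ) - f` by a lattice
vector of length at most `1`. Peetre's inequality bounds the effect of such a translation on the
weight by a factor independent of `ε`, so that `D k ≲ |k₁| D e₁ + |k₂| D e₂`, and
`|kᵢ| ≤ ε⁻¹ |ε k|` makes up for the factor `|ε k|⁻¹` in the supremum. -/

open scoped NNReal

section Peetre

theorem rpow_le_rpow_abs_mul_rpow {a b c : ℝ} (ha : 0 < a) (hb : 0 < b) (hab : a ≤ c * b)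
    (hba : b ≤ c * a) (s : ℝ) : a ^ s ≤ c ^ |s| * b ^ s := by
  have hc : 0 < c := pos_of_mul_pos_left (ha.trans_le hab) hb.le
  rcases le_total 0 s with hs | hs
  · rw [abs_of_nonneg hs, ← Real.mul_rpow hc.le hb.le]
    exact Real.rpow_le_rpow ha.le hab hs
  · have h : c ^ s * a ^ s ≤ b ^ s := by
      rw [← Real.mul_rpow hc.le ha.le]
      exact Real.rpow_le_rpow_of_nonpos hb hba hs
    rwa [abs_of_nonpos hs, Real.rpow_neg hc.le, le_inv_mul_iff₀ (Real.rpow_pos_of_pos hc s)]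

variable {E : Type*} [SeminormedAddGroup E]

theorem one_add_norm_add_sq_le (x y : E) :
    1 + ‖x + y‖ ^ 2 ≤ 2 * (1 + ‖y‖ ^ 2) * (1 + ‖x‖ ^ 2) := by
  have htri : ‖x + y‖ ^ 2 ≤ (‖x‖ + ‖y‖) ^ 2 := by gcongr; exact norm_add_le x y
  nlinarith [sq_nonneg (‖x‖ - ‖y‖), mul_nonneg (sq_nonneg ‖x‖) (sq_nonneg ‖y‖)]

theorem peetre_inequality (x y : E) (s : ℝ) :
    (1 + ‖x‖ ^ 2) ^ s ≤ (2 * (1 + ‖y‖ ^ 2)) ^ |s| * (1 + ‖x + y‖ ^ 2) ^ s := by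
  refine rpow_le_rpow_abs_mul_rpow (by positivity) (by positivity) ?_
    (one_add_norm_add_sq_le x y) s
  simpa using one_add_norm_add_sq_le (x + y) (-y)

end Peetre

section ShiftDiffNorm

variable {G E : Type*} [AddGroup G] [NormedAddCommGroup E] [NormedSpace ℝ E]

/-- The weight `w` loses at most a factor `K` under translation by `a`. -/
def WeightShiftLE (K : ℝ≥0) (w : G → ℝ) (a : G) : Prop :=
  ∀ x, ‖w x‖₊ ≤ K * ‖w (x + a)‖₊

variable [MeasurableSpace G]

/-- The weighted `L^q` norm `‖w (f(· + k) - f)‖_{L^q(μ)}` of the increment of `f` along `k`. The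
weight is a factor of the integrand, not a density of the measure. -/
noncomputable def shiftDiffNorm (q : ℝ≥0∞) (μ : Measure G) (w : G → ℝ) (f : G → E) (k : G) :
    ℝ≥0∞ :=
  eLpNorm (fun x => w x • (f (x + k) - f x)) q μ

variable {q : ℝ≥0∞} {μ : Measure G} {w : G → ℝ} {f : G → E} {K : ℝ≥0}

theorem shiftDiffNorm_zero : shiftDiffNorm q μ w f 0 = 0 := by
  simp [shiftDiffNorm]

variable [MeasurableAdd G] [μ.IsAddRightInvariant]

theorem aestronglyMeasurable_smul_shift_sub (hw : AEStronglyMeasurable w μ)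
    (hf : AEStronglyMeasurable f μ) (k : G) :
    AEStronglyMeasurable (fun x => w x • (f (x + k) - f x)) μ :=
  hw.smul ((hf.comp_measurePreserving (measurePreserving_add_right μ k)).sub hf)

theorem eLpNorm_smul_comp_add_right_le {a : G} (ha : WeightShiftLE K w a) {g : G → E}
    (hg : AEStronglyMeasurable (fun x => w x • g x) μ) :
    eLpNorm (fun x => w x • g (x + a)) q μ ≤ K * eLpNorm (fun x => w x • g x) q μ := by
  rw [← eLpNorm_comp_measurePreserving hg (measurePreserving_add_right μ a)]
  refine eLpNorm_le_nnreal_smul_eLpNorm_of_ae_le_mul (.of_forall fun x => ?_) q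
  simp only [Function.comp_apply, nnnorm_smul, ← mul_assoc]
  gcongr
  exact ha x

theorem shiftDiffNorm_add_le (hq : 1 ≤ q) (hw : AEStronglyMeasurable w μ)
    (hf : AEStronglyMeasurable f μ) {a : G} (ha : WeightShiftLE K w a) (b : G) :
    shiftDiffNorm q μ w f (a + b) ≤ shiftDiffNorm q μ w f a + K * shiftDiffNorm q μ w f b := by
  have hmeas := aestronglyMeasurable_smul_shift_sub hw hf
  have htelescope : (fun x => w x • (f (x + (a + b)) - f x)) =
      (fun x => w x • (f (x + a) - f x)) + fun x => w x • (f (x + a + b) - f (x + a)) := by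
    ext x
    simp only [Pi.add_apply, ← smul_add, ← add_assoc, add_comm (f (x + a) - f x),
      sub_add_sub_cancel]
  have hmeas_shift : AEStronglyMeasurable (fun x => w x • (f (x + a + b) - f (x + a))) μ := by
    convert (hmeas (a + b)).sub (hmeas a) using 2 with x
    simp only [Pi.sub_apply, ← smul_sub, ← add_assoc, sub_sub_sub_cancel_right]
  rw [shiftDiffNorm, htelescope]
  refine (eLpNorm_add_le (hmeas a) hmeas_shift hq).trans ?_
  gcongr
  · rfl
  · exact eLpNorm_smul_comp_add_right_le (g := fun x => f (x + b) - f x) ha (hmeas b)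

theorem shiftDiffNorm_neg_le (hw : AEStronglyMeasurable w μ) (hf : AEStronglyMeasurable f μ)
    {a : G} (ha : WeightShiftLE K w (-a)) :
    shiftDiffNorm q μ w f (-a) ≤ K * shiftDiffNorm q μ w f a := by
  have hswap : shiftDiffNorm q μ w f (-a) =
      eLpNorm (fun x => w x • (f (x + -a + a) - f (x + -a))) q μ := by
    simp only [shiftDiffNorm, neg_add_cancel_right]
    exact eLpNorm_congr_norm_ae (.of_forall fun x => by simp only [norm_smul, norm_sub_rev])
  rw [hswap]
  exact eLpNorm_smul_comp_add_right_le (g := fun x => f (x + a) - f x) ha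
    (aestronglyMeasurable_smul_shift_sub hw hf a)

theorem shiftDiffNorm_nsmul_le (hq : 1 ≤ q) (hw : AEStronglyMeasurable w μ)
    (hf : AEStronglyMeasurable f μ) {a : G} {n : ℕ} (ha : ∀ i < n, WeightShiftLE K w (i • a)) :
    shiftDiffNorm q μ w f (n • a) ≤ n * (K * shiftDiffNorm q μ w f a) := by
  induction n with
  | zero => simp [shiftDiffNorm_zero]
  | succ n ih =>
    calc shiftDiffNorm q μ w f ((n + 1) • a)
        ≤ shiftDiffNorm q μ w f (n • a) + K * shiftDiffNorm q μ w f a := by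
          rw [succ_nsmul]
          exact shiftDiffNorm_add_le hq hw hf (ha n n.lt_succ_self) a
      _ ≤ n * (K * shiftDiffNorm q μ w f a) + K * shiftDiffNorm q μ w f a := by
          gcongr
          exact ih fun i hi => ha i (hi.trans n.lt_succ_self)
      _ = (n + 1 : ℕ) * (K * shiftDiffNorm q μ w f a) := by
          rw [Nat.cast_succ, add_mul, one_mul]

theorem shiftDiffNorm_zsmul_le (hq : 1 ≤ q) (hw : AEStronglyMeasurable w μ)
    (hf : AEStronglyMeasurable f μ) (hK : 1 ≤ K) {a : G} {j : ℤ}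
    (ha : ∀ i : ℤ, |i| ≤ |j| → WeightShiftLE K w (i • a)) :
    shiftDiffNorm q μ w f (j • a) ≤ j.natAbs * (K ^ 2 * shiftDiffNorm q μ w f a) := by
  have hnat : shiftDiffNorm q μ w f (j.natAbs • a) ≤
      j.natAbs * (K * shiftDiffNorm q μ w f a) :=
    shiftDiffNorm_nsmul_le hq hw hf fun i hi => by
      simpa only [natCast_zsmul] using ha i (by grind)
  rcases j.natAbs_eq with hj | hj
  · rw [hj, natCast_zsmul, Int.natAbs_natCast]
    refine hnat.trans ?_
    gcongr
    exact le_self_pow₀ (mod_cast hK) two_ne_zero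
  · have hneg : j • a = -(j.natAbs • a) := by
      conv_lhs => rw [hj, neg_zsmul, natCast_zsmul]
    calc shiftDiffNorm q μ w f (j • a)
        ≤ K * shiftDiffNorm q μ w f (j.natAbs • a) := by
          rw [hneg]
          exact shiftDiffNorm_neg_le hw hf (hneg ▸ ha j le_rfl)
      _ ≤ K * (j.natAbs * (K * shiftDiffNorm q μ w f a)) := by gcongr
      _ = j.natAbs * (K ^ 2 * shiftDiffNorm q μ w f a) := by ring

theorem shiftDiffNorm_zsmul_add_zsmul_le (hq : 1 ≤ q) (hw : AEStronglyMeasurable w μ)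
    (hf : AEStronglyMeasurable f μ) (hK : 1 ≤ K) {a b : G} {i j : ℤ}
    (ha : ∀ m : ℤ, |m| ≤ |i| → WeightShiftLE K w (m • a))
    (hb : ∀ m : ℤ, |m| ≤ |j| → WeightShiftLE K w (m • b)) :
    shiftDiffNorm q μ w f (i • a + j • b) ≤
      K ^ 3 * (i.natAbs * shiftDiffNorm q μ w f a + j.natAbs * shiftDiffNorm q μ w f b) := by
  calc shiftDiffNorm q μ w f (i • a + j • b)
      ≤ shiftDiffNorm q μ w f (i • a) + K * shiftDiffNorm q μ w f (j • b) :=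
        shiftDiffNorm_add_le hq hw hf (ha i le_rfl) _
    _ ≤ i.natAbs * (K ^ 2 * shiftDiffNorm q μ w f a) +
          K * (j.natAbs * (K ^ 2 * shiftDiffNorm q μ w f b)) := by
        gcongr
        · exact shiftDiffNorm_zsmul_le hq hw hf hK ha
        · exact shiftDiffNorm_zsmul_le hq hw hf hK hb
    _ ≤ i.natAbs * (K ^ 3 * shiftDiffNorm q μ w f a) +
          K * (j.natAbs * (K ^ 2 * shiftDiffNorm q μ w f b)) := by
        gcongr
        · exact mod_cast hK
        · norm_num
    _ = K ^ 3 * (i.natAbs * shiftDiffNorm q μ w f a + j.natAbs * shiftDiffNorm q μ w f b) := by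
        ring

end ShiftDiffNorm

section Lattice

theorem en2_eq_norm_toLp (y : ℝ × ℝ) : en2 y = ‖WithLp.toLp 2 y‖ := by
  simp [en2, WithLp.prod_norm_eq_of_L2]

theorem abs_fst_le_en2 (y : ℝ × ℝ) : |y.1| ≤ en2 y :=
  Real.abs_le_sqrt (le_add_of_nonneg_right (sq_nonneg _))

theorem abs_snd_le_en2 (y : ℝ × ℝ) : |y.2| ≤ en2 y :=
  Real.abs_le_sqrt (le_add_of_nonneg_left (sq_nonneg _))

theorem rho2_eq_norm_toLp (ℓ : ℝ) (y : ℝ × ℝ) :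
    rho2 ℓ y = (1 + ‖WithLp.toLp 2 y‖ ^ 2) ^ (-ℓ / 2) := by
  simp [rho2, WithLp.prod_norm_sq_eq_of_L2, add_assoc]

theorem rho2_pos (ℓ : ℝ) (y : ℝ × ℝ) : 0 < rho2 ℓ y :=
  Real.rpow_pos_of_pos (by positivity) _

theorem rho2_le_two_rpow_mul_rho2_add (ℓ : ℝ) (x : ℝ × ℝ) {y : ℝ × ℝ} (hy : en2 y ≤ 1) :
    rho2 ℓ x ≤ 2 ^ |ℓ| * rho2 ℓ (x + y) := by
  rw [en2_eq_norm_toLp] at hy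
  have hbase : 2 * (1 + ‖WithLp.toLp 2 y‖ ^ 2) ≤ 2 ^ (2 : ℝ) := by
    rw [Real.rpow_two]
    nlinarith [norm_nonneg (WithLp.toLp 2 y)]
  have hexp : |ℓ| = 2 * |-ℓ / 2| := by
    rw [abs_div, abs_neg, abs_two, mul_div_cancel₀ _ two_ne_zero]
  rw [rho2_eq_norm_toLp, rho2_eq_norm_toLp, WithLp.toLp_add, hexp, Real.rpow_mul zero_le_two]
  refine (peetre_inequality (WithLp.toLp 2 x) (WithLp.toLp 2 y) _).trans ?_
  gcongr

theorem pt_add (ε : ℝ) (n m : ℤ × ℤ) : pt ε (n + m) = pt ε n + pt ε m := by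
  simp [pt, mul_add]

theorem en2_pt_le_en2_pt (ε : ℝ) {m k : ℤ × ℤ} (h₁ : |m.1| ≤ |k.1|) (h₂ : |m.2| ≤ |k.2|) :
    en2 (pt ε m) ≤ en2 (pt ε k) := by
  refine Real.sqrt_le_sqrt ?_
  simp only [pt, mul_pow]
  gcongr ε ^ 2 * ?_ + ε ^ 2 * ?_
  · exact_mod_cast sq_le_sq.2 h₁
  · exact_mod_cast sq_le_sq.2 h₂

theorem weightShiftLE_rho2_pt (ℓ : ℝ) {ε : ℝ} {m : ℤ × ℤ} (hm : en2 (pt ε m) ≤ 1) :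
    WeightShiftLE (2 ^ |ℓ|) (fun n => rho2 ℓ (pt ε n)) m := fun n => by
  rw [← NNReal.coe_le_coe]
  simpa [pt_add, abs_of_pos (rho2_pos _ _)] using
    rho2_le_two_rpow_mul_rho2_add ℓ (pt ε n) hm

/-- The measure on `ℤ²`, seen as the index set of `εℤ²`, giving mass `ε²` to every point; its
`L^p` norms are the lattice norms. -/
noncomputable def latMeasure (ε : ℝ) : Measure (ℤ × ℤ) :=
  ENNReal.ofReal (ε ^ 2) • Measure.count

instance (ε : ℝ) : (latMeasure ε).IsAddRightInvariant :=
  inferInstanceAs (ENNReal.ofReal (ε ^ 2) • Measure.count).IsAddRightInvariant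

variable {p : ℝ} (ℓ : ℝ) {ε : ℝ} (f : ℤ × ℤ → ℝ)

theorem latDiffNorm_eq_shiftDiffNorm (hp : 0 < p) (k : ℤ × ℤ) :
    latDiffNorm p ℓ ε f k =
      shiftDiffNorm (ENNReal.ofReal p) (latMeasure ε) (fun n => rho2 ℓ (pt ε n)) f k := by
  have hterm (n : ℤ × ℤ) : ENNReal.ofReal (rho2 ℓ (pt ε n) ^ p * |f (n + k) - f n| ^ p) =
      ‖rho2 ℓ (pt ε n) • (f (n + k) - f n)‖ₑ ^ p := by
    have hρ := (rho2_pos ℓ (pt ε n)).le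
    rw [Real.enorm_eq_ofReal_abs, ENNReal.ofReal_rpow_of_nonneg (abs_nonneg _) hp.le, smul_eq_mul,
      abs_mul, abs_of_nonneg hρ, Real.mul_rpow hρ (abs_nonneg _)]
  rw [shiftDiffNorm, eLpNorm_eq_lintegral_rpow_enorm_toReal (by simpa) ENNReal.ofReal_ne_top,
    ENNReal.toReal_ofReal hp.le, latMeasure, lintegral_smul_measure, lintegral_count, smul_eq_mul]
  simp only [latDiffNorm, hterm]

theorem latDiffNorm_le_of_en2_le_one (hp : 1 ≤ p) {k : ℤ × ℤ} (hk : en2 (pt ε k) ≤ 1) :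
    latDiffNorm p ℓ ε f k ≤ ((2 ^ |ℓ|) ^ 3 : ℝ≥0) *
      (k.1.natAbs * latDiffNorm p ℓ ε f (1, 0) + k.2.natAbs * latDiffNorm p ℓ ε f (0, 1)) := by
  have haxis₁ (i : ℤ) (hi : |i| ≤ |k.1|) : en2 (pt ε (i • (1, 0))) ≤ 1 :=
    (en2_pt_le_en2_pt ε (by simpa) (by simp)).trans hk
  have haxis₂ (i : ℤ) (hi : |i| ≤ |k.2|) : en2 (pt ε (i • (0, 1))) ≤ 1 :=
    (en2_pt_le_en2_pt ε (by simp) (by simpa)).trans hk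
  have hk_eq : k = k.1 • (1, 0) + k.2 • (0, 1) := by simp
  simp only [latDiffNorm_eq_shiftDiffNorm ℓ f (zero_lt_one.trans_le hp)]
  conv_lhs => rw [hk_eq]
  exact_mod_cast shiftDiffNorm_zsmul_add_zsmul_le (ENNReal.one_le_ofReal.2 hp) .of_discrete
    .of_discrete (NNReal.one_le_rpow one_le_two (abs_nonneg ℓ))
    (fun i hi => weightShiftLE_rho2_pt ℓ (haxis₁ i hi))
    (fun i hi => weightShiftLE_rho2_pt ℓ (haxis₂ i hi))

/-- The difference part of `latWNorm`: the `W^{s,p}_ℓ` norm without its `L^p_ℓ` term. -/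
noncomputable def latWSeminorm (s p ℓ ε : ℝ) (f : ℤ × ℤ → ℝ) : ℝ≥0∞ :=
  ⨆ (k : ℤ × ℤ) (_ : 0 < en2 (pt ε k) ∧ en2 (pt ε k) ≤ 1),
    ENNReal.ofReal (en2 (pt ε k) ^ (-s)) * latDiffNorm p ℓ ε f k

/-- The difference part of `nnQuotNorm`: the nearest-neighbour norm without its `L^p_ℓ` term. -/
noncomputable def nnQuotSeminorm (p ℓ ε : ℝ) (f : ℤ × ℤ → ℝ) : ℝ≥0∞ :=
  (ENNReal.ofReal (ε ^ 2) *
    ∑' n : ℤ × ℤ,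
      (ENNReal.ofReal (rho2 ℓ (pt ε n) ^ p * ε ^ (-p) * |f (n + (1, 0)) - f n| ^ p) +
        ENNReal.ofReal (rho2 ℓ (pt ε n) ^ p * ε ^ (-p) * |f (n + (0, 1)) - f n| ^ p))) ^
    (1 / p)

theorem latWNorm_eq_add (s : ℝ) :
    latWNorm s p ℓ ε f = lpNormLat p ℓ ε f + latWSeminorm s p ℓ ε f := rfl

theorem nnQuotNorm_eq_add :
    nnQuotNorm p ℓ ε f = lpNormLat p ℓ ε f + nnQuotSeminorm p ℓ ε f := rfl

theorem ofReal_inv_mul_latDiffNorm_rpow (hp : 0 < p) (hε : 0 < ε) (k : ℤ × ℤ) :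
    (ENNReal.ofReal ε⁻¹ * latDiffNorm p ℓ ε f k) ^ p = ENNReal.ofReal (ε ^ 2) *
      ∑' n, ENNReal.ofReal (rho2 ℓ (pt ε n) ^ p * ε ^ (-p) * |f (n + k) - f n| ^ p) := by
  rw [latDiffNorm, ENNReal.mul_rpow_of_nonneg _ _ hp.le, ← ENNReal.rpow_mul,
    one_div_mul_cancel hp.ne', ENNReal.rpow_one, mul_left_comm, ← ENNReal.tsum_mul_left]
  congr! 3 with n
  rw [ENNReal.ofReal_rpow_of_nonneg (by positivity) hp.le, ← ENNReal.ofReal_mul (by positivity),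
    Real.inv_rpow hε.le, ← Real.rpow_neg hε.le, ← mul_assoc, mul_comm (ε ^ (-p))]

theorem nnQuotSeminorm_eq (hp : 0 < p) (hε : 0 < ε) :
    nnQuotSeminorm p ℓ ε f =
      ((ENNReal.ofReal ε⁻¹ * latDiffNorm p ℓ ε f (1, 0)) ^ p +
        (ENNReal.ofReal ε⁻¹ * latDiffNorm p ℓ ε f (0, 1)) ^ p) ^ (1 / p) := by
  rw [ofReal_inv_mul_latDiffNorm_rpow ℓ f hp hε, ofReal_inv_mul_latDiffNorm_rpow ℓ f hp hε,
    ← mul_add, ← ENNReal.tsum_add, nnQuotSeminorm]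

theorem nnQuotSeminorm_le_inv_mul_add (hp : 1 ≤ p) (hε : 0 < ε) :
    nnQuotSeminorm p ℓ ε f ≤
      ENNReal.ofReal ε⁻¹ * latDiffNorm p ℓ ε f (1, 0) +
        ENNReal.ofReal ε⁻¹ * latDiffNorm p ℓ ε f (0, 1) :=
  (nnQuotSeminorm_eq ℓ f (zero_lt_one.trans_le hp) hε).trans_le
    (ENNReal.rpow_add_rpow_le_add _ _ hp)

theorem inv_mul_add_le_two_mul_nnQuotSeminorm (hp : 0 < p) (hε : 0 < ε) :
    ENNReal.ofReal ε⁻¹ * latDiffNorm p ℓ ε f (1, 0) +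
        ENNReal.ofReal ε⁻¹ * latDiffNorm p ℓ ε f (0, 1) ≤
      2 * nnQuotSeminorm p ℓ ε f := by
  rw [nnQuotSeminorm_eq ℓ f hp hε, two_mul, one_div]
  gcongr <;> rw [ENNReal.le_rpow_inv_iff hp]
  exacts [le_self_add, le_add_self]

theorem nnQuotSeminorm_le_two_mul_latWSeminorm (hp : 1 ≤ p) (hε : 0 < ε) (hε1 : ε ≤ 1) :
    nnQuotSeminorm p ℓ ε f ≤ 2 * latWSeminorm 1 p ℓ ε f := by
  have hstep (e : ℤ × ℤ) (he : en2 (pt ε e) = ε) :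
      ENNReal.ofReal ε⁻¹ * latDiffNorm p ℓ ε f e ≤ latWSeminorm 1 p ℓ ε f := by
    refine le_iSup₂_of_le e (he.symm ▸ ⟨hε, hε1⟩) ?_
    rw [he, Real.rpow_neg_one]
  have he₁ : en2 (pt ε (1, 0)) = ε := by simp [en2, pt, Real.sqrt_sq hε.le]
  have he₂ : en2 (pt ε (0, 1)) = ε := by simp [en2, pt, Real.sqrt_sq hε.le]
  rw [two_mul]
  exact (nnQuotSeminorm_le_inv_mul_add ℓ f hp hε).trans (add_le_add (hstep _ he₁) (hstep _ he₂))

theorem ofReal_inv_mul_natAbs_le {r : ℝ} (hr : 0 < r) (hε : 0 < ε) {j : ℤ}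
    (hj : |ε * (j : ℝ)| ≤ r) : ENNReal.ofReal r⁻¹ * j.natAbs ≤ ENNReal.ofReal ε⁻¹ := by
  rw [← ENNReal.ofReal_natCast, Nat.cast_natAbs, Int.cast_abs,
    ← ENNReal.ofReal_mul (inv_nonneg.2 hr.le)]
  refine ENNReal.ofReal_le_ofReal ?_
  rw [abs_mul, abs_of_pos hε] at hj
  rwa [inv_mul_le_iff₀ hr, ← div_eq_mul_inv, le_div_iff₀' hε]

theorem latWSeminorm_le_mul_nnQuotSeminorm (hp : 1 ≤ p) (hε : 0 < ε) :
    latWSeminorm 1 p ℓ ε f ≤ (2 * (2 ^ |ℓ|) ^ 3 : ℝ≥0) * nnQuotSeminorm p ℓ ε f := by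
  refine iSup₂_le fun k ⟨hk0, hk1⟩ => ?_
  set r := en2 (pt ε k)
  set D₁ := latDiffNorm p ℓ ε f (1, 0)
  set D₂ := latDiffNorm p ℓ ε f (0, 1)
  set K : ℝ≥0 := (2 ^ |ℓ|) ^ 3
  calc ENNReal.ofReal (r ^ (-1 : ℝ)) * latDiffNorm p ℓ ε f k
      ≤ ENNReal.ofReal r⁻¹ * (K * (k.1.natAbs * D₁ + k.2.natAbs * D₂)) := by
        rw [Real.rpow_neg_one]
        gcongr
        exact latDiffNorm_le_of_en2_le_one ℓ f hp hk1
    _ = K * (ENNReal.ofReal r⁻¹ * k.1.natAbs * D₁ + ENNReal.ofReal r⁻¹ * k.2.natAbs * D₂) := by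
        ring
    _ ≤ K * (ENNReal.ofReal ε⁻¹ * D₁ + ENNReal.ofReal ε⁻¹ * D₂) := by
        gcongr
        · exact ofReal_inv_mul_natAbs_le hk0 hε (abs_fst_le_en2 (pt ε k))
        · exact ofReal_inv_mul_natAbs_le hk0 hε (abs_snd_le_en2 (pt ε k))
    _ ≤ K * (2 * nnQuotSeminorm p ℓ ε f) := by
        gcongr
        exact inv_mul_add_le_two_mul_nnQuotSeminorm ℓ f (zero_lt_one.trans_le hp) hε
    _ = (2 * K : ℝ≥0) * nnQuotSeminorm p ℓ ε f := by
        push_cast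
        ring

theorem nnQuotNorm_le_two_mul_latWNorm (hp : 1 ≤ p) (hε : 0 < ε) (hε1 : ε ≤ 1) :
    nnQuotNorm p ℓ ε f ≤ 2 * latWNorm 1 p ℓ ε f := by
  rw [nnQuotNorm_eq_add, latWNorm_eq_add, mul_add]
  exact add_le_add (le_mul_of_one_le_left zero_le one_le_two)
    (nnQuotSeminorm_le_two_mul_latWSeminorm ℓ f hp hε hε1)

theorem latWNorm_le_mul_nnQuotNorm (hp : 1 ≤ p) (hε : 0 < ε) :
    latWNorm 1 p ℓ ε f ≤ (2 * (2 ^ |ℓ|) ^ 3 : ℝ≥0) * nnQuotNorm p ℓ ε f := by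
  have hK : (1 : ℝ≥0) ≤ 2 * (2 ^ |ℓ|) ^ 3 :=
    one_le_mul one_le_two (one_le_pow₀ (NNReal.one_le_rpow one_le_two (abs_nonneg ℓ)))
  rw [nnQuotNorm_eq_add, latWNorm_eq_add, mul_add]
  exact add_le_add (le_mul_of_one_le_left zero_le (mod_cast hK))
    (latWSeminorm_le_mul_nnQuotSeminorm ℓ f hp hε)

end Lattice

theorem stmt_11_general (p ℓ : ℝ) (hp : 1 ≤ p) :
    ∃ c C : ℝ, 0 < c ∧ c ≤ C ∧
      ∀ ε : ℝ, ε ∈ Set.Ioc (0 : ℝ) 1 → ∀ f : ℤ × ℤ → ℝ,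
        ENNReal.ofReal c * nnQuotNorm p ℓ ε f ≤ latWNorm 1 p ℓ ε f ∧
          latWNorm 1 p ℓ ε f ≤ ENNReal.ofReal C * nnQuotNorm p ℓ ε f := by
  have hK : (1 : ℝ) ≤ (2 ^ |ℓ|) ^ 3 :=
    one_le_pow₀ (Real.one_le_rpow one_le_two (abs_nonneg ℓ))
  refine ⟨2⁻¹, (2 * (2 ^ |ℓ|) ^ 3 : ℝ≥0), by norm_num, ?_, fun ε ⟨hε, hε1⟩ f => ⟨?_, ?_⟩⟩
  · push_cast
    linarith
  · rw [ENNReal.ofReal_inv_of_pos two_pos, ENNReal.ofReal_ofNat,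
      ENNReal.inv_mul_le_iff two_ne_zero ENNReal.ofNat_ne_top]
    exact nnQuotNorm_le_two_mul_latWNorm ℓ f hp hε hε1
  · rw [ENNReal.ofReal_coe_nnreal]
    exact latWNorm_le_mul_nnQuotNorm ℓ f hp hε

/-- Remark 2.13: for every `p ∈ (1,∞)` and `ℓ ∈ ℝ` there are constants `0 < c ≤ C`
such that, uniformly in `ε ∈ (0,1]`, the lattice `W^{1,p}_ℓ(εℤ²)` norm is equivalent
to the nearest-neighbour difference-quotient norm `N`:
`c N(f) ≤ ‖f‖_{W^{1,p}_ℓ(εℤ²)} ≤ C N(f)`. -/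
theorem stmt_11 (p ℓ : ℝ) (hp : 1 < p) :
    ∃ c C : ℝ, 0 < c ∧ c ≤ C ∧
      ∀ ε : ℝ, ε ∈ Set.Ioc (0 : ℝ) 1 → ∀ f : ℤ × ℤ → ℝ,
        ENNReal.ofReal c * nnQuotNorm p ℓ ε f ≤ latWNorm 1 p ℓ ε f ∧
          latWNorm 1 p ℓ ε f ≤ ENNReal.ofReal C * nnQuotNorm p ℓ ε f :=
  stmt_11_general p ℓ hp.le
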